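/- Let k ≥ 1, let w(λ,x) be a nonnegative weight function that is strictly totally positive of order k, let f : [0,∞) → [0,∞) be non-decreasing, Borel-measurable, and strictly increasing on some nonempty open interval, and let λ₁ > λ₂ > ⋯ > λ_k > 0. Assume that X is a nonnegative random variable whose probability density g is strictly positive on (0,∞), that E[w(λ_i,X)(f(X))^p] is finite for all i = 1,…,k and p = 0,1,…,k−1, and that E[w(λ_i,X)] > 0 for each i. Then every square minor of the k×k matrix with (i,j) entry H[λ_i,(f(X))^{k−j}] is strictly positive. -/

import Mathlib

open MeasureTheory

/-!
The Andréief identity writes `n! * det (∫ φ_i ψ_j dμ)` as the integral over `x ∈ αⁿ` of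
`det (φ_i(x_j)) * det (ψ_i(x_j))`. With `φ_i = w(λ_i, ·) g` and `ψ_j = f ^ p_j`, the integrand is
symmetric in `x`, so its sign can be read off at decreasing `x`: there the first factor is
nonnegative by total positivity of `w`, the second because it is a generalized Vandermonde
determinant, and both are positive when the `x_j` lie in the interval where `f` is strictly
increasing. Dividing row `i` by `E[w(λ_i, X)]` preserves the sign.

The generalized Vandermonde determinant cannot vanish at distinct positive nodes, since by
Descartes' rule of signs a nonzero real polynomial with `n` terms has fewer than `n` positive
roots. Its sign follows by induction: as a polynomial in the largest node, its leading coefficient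
is a smaller determinant of the same kind.
-/

open Finset Polynomial

section SparsePolynomial

section Descartes

variable {R : Type*} [CommRing R] [LinearOrder R]

theorem signVariations_lt_card_support {P : R[X]} (hP : P ≠ 0) :
    P.signVariations < #P.support := by
  induction hn : #P.support generalizing P with
  | zero => exact absurd (card_support_eq_zero.mp hn) hP
  | succ n ih =>
    have hstep := signVariations_le_eraseLead_succ (P := P)
    by_cases hE : P.eraseLead = 0
    · have hmono : P = monomial P.natDegree P.leadingCoeff := by
        simpa [hE] using P.eraseLead_add_monomial_natDegree_leadingCoeff.symm
      rw [hmono, signVariations_monomial]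
      exact n.succ_pos
    · have := ih hE (card_support_eraseLead' hn)
      omega

theorem card_pos_roots_lt_card_support [IsStrictOrderedRing R] {P : R[X]} (hP : P ≠ 0)
    {s : Finset R} (hs : ∀ x ∈ s, 0 < x ∧ P.IsRoot x) : #s < #P.support := by
  have hle : s.val ≤ P.roots.filter (0 < ·) := by
    refine (Multiset.le_iff_subset s.nodup).mpr fun x hx => ?_
    rw [Multiset.mem_filter, mem_roots hP]
    exact (hs x hx).symm
  calc
    #s ≤ P.roots.countP (0 < ·) := by
      rw [Multiset.countP_eq_card_filter]
      exact Multiset.card_le_card hle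
    _ ≤ P.signVariations := roots_countP_pos_le_signVariations P
    _ < #P.support := signVariations_lt_card_support hP

end Descartes

theorem card_support_sum_monomial_le {R ι : Type*} [Semiring R] [Fintype ι] (p : ι → ℕ)
    (c : ι → R) : #(∑ j, monomial (p j) (c j)).support ≤ Fintype.card ι := by
  classical
  have hsub : (∑ j, monomial (p j) (c j)).support ⊆ univ.image p := by
    intro q hq
    obtain ⟨j, -, hj⟩ := exists_ne_zero_of_sum_ne_zero
      (by simpa only [finsetSum_coeff] using mem_support_iff.mp hq)
    exact mem_image.mpr ⟨j, mem_univ j, by_contra fun h => hj (coeff_monomial_of_ne _ (Ne.symm h))⟩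
  exact (card_le_card hsub).trans card_image_le

theorem coeff_sum_monomial {R ι : Type*} [Semiring R] [Fintype ι] {p : ι → ℕ}
    (hp : Function.Injective p) (c : ι → R) (i : ι) :
    (∑ j, monomial (p j) (c j)).coeff (p i) = c i := by
  classical
  simp [coeff_monomial, hp.eq_iff]

theorem leadingCoeff_sum_monomial {R : Type*} [Semiring R] {n : ℕ} {p : Fin (n + 1) → ℕ}
    (hp : StrictAnti p) {c : Fin (n + 1) → R} (hc : c 0 ≠ 0) :
    (∑ j, monomial (p j) (c j)).leadingCoeff = c 0 := by
  have hdeg : (∑ j, monomial (p j) (c j)).natDegree = p 0 := by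
    refine natDegree_eq_of_le_of_coeff_ne_zero ?_ (by rwa [coeff_sum_monomial hp.injective])
    exact natDegree_sum_le_of_forall_le _ _ fun j _ =>
      (natDegree_monomial_le _).trans (hp.antitone j.zero_le)
  rw [leadingCoeff, hdeg, coeff_sum_monomial hp.injective]

end SparsePolynomial

section CollocationMatrix

/-- The collocation matrix `(φ_i(x_j))` of the functions `φ_i` at the nodes `x_j`. Total positivity,
generalized Vandermonde determinants and the Andréief identity are all stated in terms of it. -/
def collocationMatrix {ι α R : Type*} (φ : ι → α → R) (x : ι → α) : Matrix ι ι R :=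
  Matrix.of fun i j => φ i (x j)

variable {ι α R : Type*} [CommRing R]

section Fintype

variable [Fintype ι] [DecidableEq ι]

theorem det_collocationMatrix_comp_perm (φ : ι → α → R) (x : ι → α) (σ : Equiv.Perm ι) :
    (collocationMatrix φ (x ∘ σ)).det = Equiv.Perm.sign σ * (collocationMatrix φ x).det :=
  Matrix.det_permute' σ (collocationMatrix φ x)

theorem det_collocationMatrix_eq_zero (φ : ι → α → R) {x : ι → α} (hx : ¬ Function.Injective x) :
    (collocationMatrix φ x).det = 0 := by
  obtain ⟨i, j, hij, hne⟩ := Function.not_injective_iff.mp hx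
  exact Matrix.det_zero_of_column_eq hne fun l => congrArg (φ l) hij

theorem det_collocationMatrix_mul (φ : ι → α → R) (g : α → R) (x : ι → α) :
    (collocationMatrix (fun i t => φ i t * g t) x).det =
      (∏ j, g (x j)) * (collocationMatrix φ x).det := by
  rw [← Matrix.det_mul_row]
  simp only [collocationMatrix, Matrix.of_apply, mul_comm]

-- Only the second determinant is expanded: absorbing its monomials into the columns of the first
-- gives determinants whose `j`-th column depends on a single variable.
theorem det_collocationMatrix_mul_det (φ ψ : ι → α → R) (x : ι → α) :
    (collocationMatrix φ x).det * (collocationMatrix ψ x).det =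
      ∑ σ : Equiv.Perm ι, (Matrix.of fun i j => φ i ((x ∘ σ) j) * ψ j ((x ∘ σ) j)).det := by
  rw [← Matrix.det_transpose (collocationMatrix ψ x),
    Matrix.det_apply' (collocationMatrix ψ x).transpose, mul_sum]
  refine sum_congr rfl fun σ _ => ?_
  have hscale := Matrix.det_mul_row (fun j => ψ j (x (σ j))) (collocationMatrix φ (x ∘ σ))
  simp only [mul_comm (ψ _ _), det_collocationMatrix_comp_perm] at hscale
  refine Eq.trans ?_ hscale.symm
  simp only [collocationMatrix, Matrix.transpose_apply, Matrix.of_apply]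
  ring

end Fintype

theorem det_collocationMatrix_cons {n : ℕ} (φ : Fin (n + 1) → α → R) (t : α) (x : Fin n → α) :
    (collocationMatrix φ (Fin.cons t x : Fin (n + 1) → α)).det =
      ∑ i : Fin (n + 1),
        (-1) ^ (i : ℕ) * φ i t * (collocationMatrix (fun j => φ (i.succAbove j)) x).det := by
  rw [Matrix.det_succ_column_zero]
  rfl

end CollocationMatrix

section GeneralizedVandermonde

theorem det_collocationMatrix_pow_ne_zero {R ι : Type*} [CommRing R] [LinearOrder R]
    [IsStrictOrderedRing R] [Fintype ι] [DecidableEq ι] {y : ι → R} {p : ι → ℕ}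
    (hy : Function.Injective y) (hy0 : ∀ i, 0 < y i) (hp : Function.Injective p) :
    (collocationMatrix (fun j (t : R) => t ^ p j) y).det ≠ 0 := by
  intro hdet
  obtain ⟨c, hc, hker⟩ := Matrix.exists_vecMul_eq_zero_iff.mpr hdet
  obtain ⟨i, hi⟩ := Function.ne_iff.mp hc
  let P : R[X] := ∑ j, monomial (p j) (c j)
  have hP : P ≠ 0 := fun h => hi (by simpa [P, h] using (coeff_sum_monomial hp c i).symm)
  have hroot : ∀ j, P.IsRoot (y j) := fun j => by
    simpa [P, IsRoot, eval_finsetSum, Matrix.vecMul, dotProduct, collocationMatrix]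
      using congrFun hker j
  have hroots : ∀ x ∈ univ.image y, 0 < x ∧ P.IsRoot x := by
    simpa using fun j => ⟨hy0 j, hroot j⟩
  have hlt := card_pos_roots_lt_card_support hP hroots
  rw [card_image_of_injective _ hy, card_univ] at hlt
  exact hlt.not_ge (card_support_sum_monomial_le p c)

theorem det_collocationMatrix_pow_pos {n : ℕ} {y : Fin n → ℝ} {p : Fin n → ℕ} (hy : StrictAnti y)
    (hy0 : ∀ i, 0 < y i) (hp : StrictAnti p) :
    0 < (collocationMatrix (fun j (t : ℝ) => t ^ p j) y).det := by
  induction n with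
  | zero => simp
  | succ n ih =>
    let z : Fin n → ℝ := y ∘ Fin.succ
    let c : Fin (n + 1) → ℝ := fun i =>
      (-1) ^ (i : ℕ) * (collocationMatrix (fun j (t : ℝ) => t ^ p (i.succAbove j)) z).det
    let P : ℝ[X] := ∑ j, monomial (p j) (c j)
    have heval : ∀ t, P.eval t =
        (collocationMatrix (fun j (t : ℝ) => t ^ p j) (Fin.cons t z : Fin (n + 1) → ℝ)).det := by
      intro t
      simp only [det_collocationMatrix_cons, P, c, eval_finsetSum, eval_monomial, mul_right_comm]
    have hc : 0 < c 0 := by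
      simpa [c, z] using ih (hy.comp_strictMono Fin.strictMono_succ) (fun i => hy0 i.succ)
        (hp.comp_strictMono Fin.strictMono_succ)
    have hroots : ∀ t, P.IsRoot t → t < y 0 := by
      intro t ht
      by_contra! hle
      have hz : ∀ i, z i < t := fun i => (hy i.succ_pos).trans_le hle
      refine det_collocationMatrix_pow_ne_zero (y := Fin.cons t z) ?_ ?_ hp.injective
        ((heval t).symm.trans ht)
      · refine Fin.cons_injective_iff.mpr ⟨?_, hy.injective.comp (Fin.succ_injective n)⟩
        rintro ⟨i, hi⟩
        exact (hz i).ne hi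
      · exact Fin.cases ((hy0 0).trans_le hle) fun i => hy0 i.succ
    have hpos := zero_lt_eval_of_roots_lt_of_leadingCoeff_nonneg hroots
      (leadingCoeff_sum_monomial hp hc.ne' ▸ hc.le)
    rwa [heval, show Fin.cons (y 0) z = y from Fin.cons_self_tail y] at hpos

theorem det_collocationMatrix_pow_nonneg {n : ℕ} {y : Fin n → ℝ} {p : Fin n → ℕ} (hy : Antitone y)
    (hy0 : ∀ i, 0 ≤ y i) (hp : StrictAnti p) :
    0 ≤ (collocationMatrix (fun j (t : ℝ) => t ^ p j) y).det := by
  by_cases hinj : Function.Injective y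
  swap
  · exact (det_collocationMatrix_eq_zero _ hinj).ge
  let D : ℝ → ℝ := fun e => (collocationMatrix (fun j (t : ℝ) => t ^ p j) fun i => y i + e).det
  have hD : Continuous D := by
    refine Continuous.matrix_det (continuous_matrix fun i j => ?_)
    simp only [collocationMatrix, Matrix.of_apply]
    fun_prop
  have hpos : ∀ e ∈ Set.Ioi (0 : ℝ), 0 ≤ D e := fun e he =>
    (det_collocationMatrix_pow_pos ((hy.strictAnti_of_injective hinj).add_const e)
      (fun i => add_pos_of_nonneg_of_pos (hy0 i) he) hp).le
  have hlim : 0 ≤ D 0 :=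
    ge_of_tendsto (hD.continuousWithinAt (s := Set.Ioi 0)) (eventually_mem_nhdsWithin.mono hpos)
  simpa [D] using hlim

end GeneralizedVandermonde

section Andreief

theorem integrable_det_of_column {ι 𝕜 : Type*} [Fintype ι] [DecidableEq ι] [RCLike 𝕜]
    {α : ι → Type*} [∀ j, MeasurableSpace (α j)] {μ : ∀ j, Measure (α j)} [∀ j, SigmaFinite (μ j)]
    {h : ι → ∀ j, α j → 𝕜} (hh : ∀ i j, Integrable (h i j) (μ j)) :
    Integrable (fun x => (Matrix.of fun i j => h i j (x j)).det) (Measure.pi μ) := by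
  simp only [Matrix.det_apply', Matrix.of_apply]
  exact integrable_finsetSum _ fun σ _ =>
    (Integrable.fintype_prod_dep fun j => hh (σ j) j).const_mul _

theorem integral_det_of_column {ι 𝕜 : Type*} [Fintype ι] [DecidableEq ι] [RCLike 𝕜]
    {α : ι → Type*} [∀ j, MeasurableSpace (α j)] {μ : ∀ j, Measure (α j)} [∀ j, SigmaFinite (μ j)]
    {h : ι → ∀ j, α j → 𝕜} (hh : ∀ i j, Integrable (h i j) (μ j)) :
    ∫ x, (Matrix.of fun i j => h i j (x j)).det ∂Measure.pi μ =
      (Matrix.of fun i j => ∫ t, h i j t ∂μ j).det := by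
  simp only [Matrix.det_apply', Matrix.of_apply]
  rw [integral_finsetSum _ fun σ _ =>
    (Integrable.fintype_prod_dep fun j => hh (σ j) j).const_mul _]
  simp only [integral_const_mul, integral_fintype_prod_eq_prod]

variable {ι α : Type*} [Fintype ι] [MeasurableSpace α]

theorem measurePreserving_comp_perm (μ : Measure α) [SigmaFinite μ] (σ : Equiv.Perm ι) :
    MeasurePreserving (fun x : ι → α => x ∘ σ) (Measure.pi fun _ => μ) (Measure.pi fun _ => μ) := by
  convert measurePreserving_piCongrLeft (fun _ : ι => μ) σ.symm using 1
  funext x i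
  simpa using (MeasurableEquiv.piCongrLeft_apply_apply σ.symm (β := fun _ => α) x (σ i)).symm

variable {𝕜 : Type*} [RCLike 𝕜] [DecidableEq ι] {μ : Measure α} [SigmaFinite μ]
  {φ ψ : ι → α → 𝕜}

theorem integrable_det_mul_det (h : ∀ i j, Integrable (fun t => φ i t * ψ j t) μ) :
    Integrable (fun x => (collocationMatrix φ x).det * (collocationMatrix ψ x).det)
      (Measure.pi fun _ => μ) := by
  simp only [det_collocationMatrix_mul_det]
  exact integrable_finsetSum _ fun σ _ =>
    (measurePreserving_comp_perm μ σ).integrable_comp_of_integrable (integrable_det_of_column h)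

theorem andreief_identity (h : ∀ i j, Integrable (fun t => φ i t * ψ j t) μ) :
    ∫ x, (collocationMatrix φ x).det * (collocationMatrix ψ x).det ∂(Measure.pi fun _ => μ) =
      (Fintype.card ι).factorial * (Matrix.of fun i j => ∫ t, φ i t * ψ j t ∂μ).det := by
  let F : (ι → α) → 𝕜 := fun x => (Matrix.of fun i j => φ i (x j) * ψ j (x j)).det
  have hF : Integrable F (Measure.pi fun _ => μ) := integrable_det_of_column h
  have hF_perm (σ : Equiv.Perm ι) :
      ∫ x, F (x ∘ σ) ∂(Measure.pi fun _ => μ) = ∫ x, F x ∂(Measure.pi fun _ => μ) := by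
    have hσ := measurePreserving_comp_perm μ σ
    have hmap := integral_map hσ.aemeasurable (hσ.map_eq.symm ▸ hF.aestronglyMeasurable)
    rwa [hσ.map_eq, eq_comm] at hmap
  calc
    _ = ∫ x, ∑ σ : Equiv.Perm ι, F (x ∘ σ) ∂(Measure.pi fun _ => μ) := by
      simp only [det_collocationMatrix_mul_det, F]
    _ = ∑ σ : Equiv.Perm ι, ∫ x, F (x ∘ σ) ∂(Measure.pi fun _ => μ) :=
      integral_finsetSum _ fun σ _ =>
        (measurePreserving_comp_perm μ σ).integrable_comp_of_integrable hF
    _ = (Fintype.card ι).factorial * ∫ x, F x ∂(Measure.pi fun _ => μ) := by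
      simp only [hF_perm, sum_const, card_univ, Fintype.card_perm, nsmul_eq_mul]
    _ = _ := by rw [integral_det_of_column h]

end Andreief

section Positivity

variable {α : Type*} {n : ℕ} {S : Set α}

theorem det_mul_det_nonneg_of_strictAnti {R : Type*} [CommRing R] [PartialOrder R] [IsOrderedRing R]
    [LinearOrder α] {φ ψ : Fin n → α → R}
    (hφ : ∀ x : Fin n → α, StrictAnti x → (∀ i, x i ∈ S) → 0 ≤ (collocationMatrix φ x).det)
    (hψ : ∀ x : Fin n → α, StrictAnti x → (∀ i, x i ∈ S) → 0 ≤ (collocationMatrix ψ x).det)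
    {x : Fin n → α} (hx : ∀ i, x i ∈ S) :
    0 ≤ (collocationMatrix φ x).det * (collocationMatrix ψ x).det := by
  by_cases hinj : Function.Injective x
  swap
  · rw [det_collocationMatrix_eq_zero φ hinj, zero_mul]
  let σ : Equiv.Perm (Fin n) := Tuple.sort (OrderDual.toDual ∘ x)
  have hσ : StrictAnti (x ∘ σ) :=
    Antitone.strictAnti_of_injective (Tuple.monotone_sort (OrderDual.toDual ∘ x)).dual_right
      (hinj.comp σ.injective)
  have hsign : ((Equiv.Perm.sign σ : ℤ) : R) * (Equiv.Perm.sign σ : ℤ) = 1 := by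
    rw [← Int.cast_mul, Int.units_coe_mul_self, Int.cast_one]
  calc
    0 ≤ (collocationMatrix φ (x ∘ σ)).det * (collocationMatrix ψ (x ∘ σ)).det :=
      mul_nonneg (hφ _ hσ fun i => hx (σ i)) (hψ _ hσ fun i => hx (σ i))
    _ = (collocationMatrix φ x).det * (collocationMatrix ψ x).det := by
      rw [det_collocationMatrix_comp_perm, det_collocationMatrix_comp_perm, mul_mul_mul_comm,
        hsign, one_mul]

theorem det_integral_mul_pos [LinearOrder α] [MeasurableSpace α] {μ : Measure α} [SigmaFinite μ]
    {φ ψ : Fin n → α → ℝ} (hS : ∀ᵐ t ∂μ, t ∈ S)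
    (h_int : ∀ i j, Integrable (fun t => φ i t * ψ j t) μ)
    (hφ : ∀ x : Fin n → α, StrictAnti x → (∀ i, x i ∈ S) → 0 ≤ (collocationMatrix φ x).det)
    (hψ : ∀ x : Fin n → α, StrictAnti x → (∀ i, x i ∈ S) → 0 ≤ (collocationMatrix ψ x).det)
    {U : Fin n → Set α} (hU : ∀ i, μ (U i) ≠ 0)
    (hφU : ∀ x : Fin n → α, (∀ i, x i ∈ U i) → 0 < (collocationMatrix φ x).det)
    (hψU : ∀ x : Fin n → α, (∀ i, x i ∈ U i) → 0 < (collocationMatrix ψ x).det) :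
    0 < (Matrix.of fun i j => ∫ t, φ i t * ψ j t ∂μ).det := by
  let D : (Fin n → α) → ℝ := fun x => (collocationMatrix φ x).det * (collocationMatrix ψ x).det
  have hD_nonneg : 0 ≤ᵐ[Measure.pi fun _ => μ] D := by
    have hmem : ∀ᵐ x ∂(Measure.pi fun _ : Fin n => μ), ∀ i, x i ∈ S :=
      ae_all_iff.mpr fun i => Measure.tendsto_eval_ae_ae.eventually hS
    exact hmem.mono fun x hx => det_mul_det_nonneg_of_strictAnti hφ hψ hx
  have hD_support : Set.univ.pi U ⊆ Function.support D := fun x hx =>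
    (mul_pos (hφU x fun i => hx i trivial) (hψU x fun i => hx i trivial)).ne'
  have hpi : 0 < (Measure.pi fun _ => μ) (Set.univ.pi U) := by
    rw [Measure.pi_pi]
    exact pos_iff_ne_zero.mpr (prod_ne_zero_iff.mpr fun i _ => hU i)
  have hD_pos : 0 < ∫ x, D x ∂(Measure.pi fun _ => μ) :=
    (integral_pos_iff_support_of_nonneg_ae hD_nonneg (integrable_det_mul_det h_int)).mpr
      (hpi.trans_le (measure_mono hD_support))
  rw [andreief_identity h_int] at hD_pos
  exact pos_of_mul_pos_right hD_pos (Nat.cast_nonneg _)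

theorem exists_open_subsets_Ioo_forall_strictAnti [LinearOrder α] [DenselyOrdered α]
    [TopologicalSpace α] [OrderClosedTopology α] {a b : α} (hab : a < b) (n : ℕ) :
    ∃ U : Fin n → Set α, (∀ i, IsOpen (U i) ∧ (U i).Nonempty ∧ U i ⊆ Set.Ioo a b) ∧
      ∀ x : Fin n → α, (∀ i, x i ∈ U i) → StrictAnti x := by
  have : Nonempty (Set.Ioo a b) := (Set.nonempty_Ioo.mpr hab).to_subtype
  obtain ⟨u, hu⟩ := Nat.exists_strictAnti (Set.Ioo a b)
  refine ⟨fun i => Set.Ioo (u (i + 1)) (u i), fun i => ⟨isOpen_Ioo, ?_, ?_⟩, fun x hx i j hij => ?_⟩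
  · exact Set.nonempty_Ioo.mpr (hu (i : ℕ).lt_succ_self)
  · exact Set.Ioo_subset_Ioo (u _).2.1.le (u _).2.2.le
  · have hle : (u j : α) ≤ u (i + 1) := hu.antitone (Nat.succ_le_of_lt hij)
    exact (hx j).2.trans_le (hle.trans (hx i).1.le)

theorem pos_of_strictMonoOn_Ioo {β : Type*} [Zero β] [Preorder β] [Preorder α] [DenselyOrdered α]
    {f : α → β} {a b : α} (hf : StrictMonoOn f (Set.Ioo a b))
    (hf_nonneg : ∀ x ∈ Set.Ioo a b, 0 ≤ f x) {x : α} (hx : x ∈ Set.Ioo a b) : 0 < f x := by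
  obtain ⟨y, hay, hyx⟩ := exists_between hx.1
  have hy : y ∈ Set.Ioo a b := ⟨hay, hyx.trans hx.2⟩
  exact (hf_nonneg y hy).trans_lt (hf hy hx hyx)

end Positivity

section WeightedPremium

/-- The generalized weighted premium `E[v(X) h(X)] / E[v(X)]` of `h(X)` with weight `v`, where `X`
has density `g` with respect to `μ`; `H[λ, h(X)]` is the case `v = w λ`. -/
noncomputable def weightedPremium {α : Type*} [MeasurableSpace α] (μ : Measure α) (g v h : α → ℝ) :
    ℝ :=
  (∫ x, v x * h x * g x ∂μ) / ∫ x, v x * g x ∂μ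

/-- Strict total positivity of order `k` of the kernel `w` on `Λ × S`. Parameters and nodes are both
listed in decreasing order. -/
def IsStrictlyTotallyPositiveOn {Λ α : Type*} [Preorder Λ] [Preorder α] (w : Λ → α → ℝ)
    (S : Set α) (k : ℕ) : Prop :=
  ∀ r : ℕ, 1 ≤ r → r ≤ k → ∀ (l : Fin r → Λ) (x : Fin r → α), StrictAnti l → StrictAnti x →
    (∀ i, x i ∈ S) → 0 < (collocationMatrix (fun i => w (l i)) x).det

variable {α : Type*} [LinearOrder α] [DenselyOrdered α] [TopologicalSpace α] [OrderClosedTopology α]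
  [MeasurableSpace α] {μ : Measure α} [SigmaFinite μ] [μ.IsOpenPosMeasure] {S : Set α}
  {f g : α → ℝ} {a b : α}

theorem det_integral_weight_mul_pow_pos {n : ℕ} {v : Fin n → α → ℝ} {p : Fin n → ℕ}
    (hS : MeasurableSet S)
    (hv : ∀ x : Fin n → α, StrictAnti x → (∀ i, x i ∈ S) → 0 < (collocationMatrix v x).det)
    (hf_nonneg : ∀ x ∈ S, 0 ≤ f x) (hf_mono : MonotoneOn f S)
    (hab : a < b) (hab_sub : Set.Ioo a b ⊆ S) (hf_strict : StrictMonoOn f (Set.Ioo a b))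
    (hg_nonneg : ∀ x ∈ S, 0 ≤ g x) (hg_pos : ∀ x ∈ Set.Ioo a b, 0 < g x) (hp : StrictAnti p)
    (h_int : ∀ i j, IntegrableOn (fun x => v i x * f x ^ p j * g x) S μ) :
    0 < (Matrix.of fun i j => ∫ x in S, v i x * f x ^ p j * g x ∂μ).det := by
  obtain ⟨U, hU, hU_anti⟩ := exists_open_subsets_Ioo_forall_strictAnti hab n
  have hU_Ioo {x : Fin n → α} (hx : ∀ i, x i ∈ U i) (i : Fin n) : x i ∈ Set.Ioo a b :=
    (hU i).2.2 (hx i)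
  simp only [mul_right_comm _ (f _ ^ _) (g _)] at h_int ⊢
  refine det_integral_mul_pos (φ := fun i x => v i x * g x) (ψ := fun j x => f x ^ p j) (U := U)
    (ae_restrict_mem hS) h_int ?_ ?_ ?_ ?_ ?_
  · intro x hx hxS
    rw [det_collocationMatrix_mul]
    exact mul_nonneg (prod_nonneg fun j _ => hg_nonneg _ (hxS j)) (hv x hx hxS).le
  · intro x hx hxS
    exact det_collocationMatrix_pow_nonneg (y := f ∘ x)
      (fun i j hij => hf_mono (hxS j) (hxS i) (hx.antitone hij)) (fun i => hf_nonneg _ (hxS i)) hp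
  · intro i
    rw [Measure.restrict_eq_self μ ((hU i).2.2.trans hab_sub)]
    exact (hU i).1.measure_ne_zero μ (hU i).2.1
  · intro x hx
    rw [det_collocationMatrix_mul]
    exact mul_pos (prod_pos fun j _ => hg_pos _ (hU_Ioo hx j))
      (hv x (hU_anti x hx) fun i => hab_sub (hU_Ioo hx i))
  · intro x hx
    exact det_collocationMatrix_pow_pos (y := f ∘ x)
      (fun i j hij => hf_strict (hU_Ioo hx j) (hU_Ioo hx i) (hU_anti x hx hij))
      (fun i => pos_of_strictMonoOn_Ioo hf_strict (fun y hy => hf_nonneg y (hab_sub hy))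
        (hU_Ioo hx i)) hp

theorem det_weightedPremium_pos {β : Type*} [MeasurableSpace β] {ν : Measure β} {ι : Type*}
    [Fintype ι] [DecidableEq ι] {v h : ι → β → ℝ} {q : β → ℝ}
    (hden : ∀ i, 0 < ∫ x, v i x * q x ∂ν)
    (hdet : 0 < (Matrix.of fun i j => ∫ x, v i x * h j x * q x ∂ν).det) :
    0 < (Matrix.of fun i j => weightedPremium ν q (v i) (h j)).det := by
  have hscale := Matrix.det_mul_column (fun i => (∫ x, v i x * q x ∂ν)⁻¹)
    (Matrix.of fun i j => ∫ x, v i x * h j x * q x ∂ν)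
  simp only [Matrix.of_apply, ← div_eq_inv_mul] at hscale
  simp only [weightedPremium, hscale]
  exact mul_pos (prod_pos fun i _ => inv_pos.mpr (hden i)) hdet

theorem stmt_1_general {Λ : Type*} [Preorder Λ] {k : ℕ} {w : Λ → α → ℝ}
    (hS : MeasurableSet S) (hw : IsStrictlyTotallyPositiveOn w S k)
    (hf_nonneg : ∀ x ∈ S, 0 ≤ f x) (hf_mono : MonotoneOn f S)
    (hab : a < b) (hab_sub : Set.Ioo a b ⊆ S) (hf_strict : StrictMonoOn f (Set.Ioo a b))
    {lam : Fin k → Λ} (hlam : StrictAnti lam)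
    (hg_nonneg : ∀ x ∈ S, 0 ≤ g x) (hg_pos : ∀ x ∈ Set.Ioo a b, 0 < g x)
    (h_int : ∀ (i : Fin k) (p : ℕ), p ≤ k - 1 →
      IntegrableOn (fun x => w (lam i) x * f x ^ p * g x) S μ)
    (hden : ∀ i, 0 < ∫ x in S, w (lam i) x * g x ∂μ)
    {m : ℕ} (hm : 1 ≤ m) (hmk : m ≤ k) {r c : Fin m → Fin k} (hr : StrictMono r)
    (hc : StrictMono c) :
    0 < (Matrix.of fun i j => weightedPremium (μ.restrict S) g (w (lam (r i)))
      fun x => f x ^ (k - 1 - (c j : ℕ))).det := by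
  have hp : StrictAnti fun j => k - 1 - (c j : ℕ) := fun i j hij => by
    have := hc hij
    dsimp only
    omega
  exact det_weightedPremium_pos (fun i => hden (r i)) <|
    det_integral_weight_mul_pow_pos hS
      (fun x hx hxS => hw m hm hmk _ x (hlam.comp_strictMono hr) hx hxS)
      hf_nonneg hf_mono hab hab_sub hf_strict hg_nonneg hg_pos hp
      fun i j => h_int (r i) _ (Nat.sub_le _ _)

end WeightedPremium

/-- If the weight function `w` is strictly totally positive of order `k`,
`f : [0,∞) → [0,∞)` is non-decreasing, Borel measurable, and strictly increasing on some
nonempty open interval, `λ₁ > ⋯ > λ_k > 0`, the density `g` is strictly positive on `(0,∞)`,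
and the relevant expectations are finite with positive denominators, then every square minor
of the `k × k` matrix with `(i,j)` entry `H[λ_i, (f(X))^{k-j}]` is strictly positive. -/
theorem stmt_1
    (k : ℕ) (hk : 1 ≤ k)
    (w : ℝ → ℝ → ℝ) (hw_nonneg : ∀ l x : ℝ, 0 ≤ w l x)
    (hSTP : ∀ r : ℕ, 1 ≤ r → r ≤ k → ∀ l x : Fin r → ℝ,
      (∀ i j : Fin r, i < j → l j < l i) →
      (∀ i j : Fin r, i < j → x j < x i) →
      0 < Matrix.det (Matrix.of fun i j : Fin r => w (l i) (x j)))
    (f : ℝ → ℝ) (hf_nonneg : ∀ x : ℝ, 0 ≤ x → 0 ≤ f x)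
    (hf_mono : ∀ x y : ℝ, 0 ≤ x → x ≤ y → f x ≤ f y)
    (hf_meas : Measurable f)
    (hf_strict : ∃ a b : ℝ, 0 ≤ a ∧ a < b ∧
      ∀ x y : ℝ, a < x → x < y → y < b → f x < f y)
    (lam : Fin k → ℝ) (hlam_pos : ∀ i : Fin k, 0 < lam i)
    (hlam_anti : ∀ i j : Fin k, i < j → lam j < lam i)
    (g : ℝ → ℝ) (hg_nonneg : ∀ x : ℝ, 0 ≤ g x)
    (hg_pos : ∀ x : ℝ, 0 < x → 0 < g x)
    (hg_meas : Measurable g)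
    (hg_prob : ∫ x in Set.Ici (0:ℝ), g x = 1)
    (hInt : ∀ (i : Fin k) (p : ℕ), p ≤ k - 1 →
      IntegrableOn (fun x => w (lam i) x * f x ^ p * g x) (Set.Ici 0))
    (hden_pos : ∀ i : Fin k, 0 < ∫ x in Set.Ici (0:ℝ), w (lam i) x * g x) :
    ∀ m : ℕ, 1 ≤ m → m ≤ k → ∀ r c : Fin m → Fin k,
      (∀ i j : Fin m, i < j → r i < r j) →
      (∀ i j : Fin m, i < j → c i < c j) →
      0 < Matrix.det (Matrix.of fun i j : Fin m =>
        (∫ x in Set.Ici (0:ℝ), w (lam (r i)) x * f x ^ (k - 1 - (c j : ℕ)) * g x) /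
        (∫ x in Set.Ici (0:ℝ), w (lam (r i)) x * g x)) := by
  obtain ⟨a, b, ha, hab, hf_strict⟩ := hf_strict
  exact fun m hm hmk r c hr hc => stmt_1_general (μ := volume) measurableSet_Ici
    (fun r h1 hrk l x hl hx _ => hSTP r h1 hrk l x hl hx) hf_nonneg
    (fun x hx y _ hxy => hf_mono x y hx hxy) hab (fun x hx => ha.trans hx.1.le)
    (fun x hx y hy hxy => hf_strict x y hx.1 hxy hy.2) hlam_anti (fun x _ => hg_nonneg x)
    (fun x hx => hg_pos x (ha.trans_lt hx.1)) hInt hden_pos hm hmk hr hc
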